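/- arXiv:2002.00559 — 4 statements merged into one kernel-verified Lean document; each statement's English description precedes it below -/
import Mathlib

section
/- Let c, d, s be positive integers with c ≤ s and d ≤ s, and let q be a prime power. Let E be a random matrix distributed uniformly over the set of s×s matrices with entries in the finite field F_q. Let F be a fixed full-rank c×s matrix over F_q and G a fixed full-rank s×d matrix over F_q. Then the conditional Shannon entropy in base q of the matrix FE given the matrix EG satisfies H_q(FE | EG) ≥ cs − cd. -/
open Finset Matrix

/-- `pr p X x` is the probability that the random variable `X` (on a finite sample
space with probability mass function `p`) takes the value `x`. -/
noncomputable def pr {Ω α : Type*} [Fintype Ω] [DecidableEq α]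
    (p : Ω → ℝ) (X : Ω → α) (x : α) : ℝ :=
  ∑ ω, if X ω = x then p ω else 0

/-- Shannon entropy in base `q` of the random variable `X`. -/
noncomputable def Hq {Ω α : Type*} [Fintype Ω] [Fintype α] [DecidableEq α]
    (q : ℕ) (p : Ω → ℝ) (X : Ω → α) : ℝ :=
  -∑ x : α, pr p X x * Real.logb q (pr p X x)

/-- Conditional Shannon entropy in base `q`: `H_q(X | Y) = H_q(X, Y) - H_q(Y)`. -/
noncomputable def condHq {Ω α β : Type*} [Fintype Ω] [Fintype α] [Fintype β]
    [DecidableEq α] [DecidableEq β]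
    (q : ℕ) (p : Ω → ℝ) (X : Ω → α) (Y : Ω → β) : ℝ :=
  Hq q p (fun ω => (X ω, Y ω)) - Hq q p Y

/-! A linear map sends the uniform distribution to the uniform distribution on its range, because
all its nonempty fibres are translates of the kernel; so its entropy in base `q` is its rank. By
rank-nullity, conditioning a linear map `f` on a linear map `g` therefore leaves the entropy
`dim f (ker g)`. Here `f (ker g)` consists of the matrices `F * E` with `E * G = 0`. Such an `E`
is a linear map that factors through the quotient by the range of `G`, and composing it with `F`
produces every linear map from that quotient to the range of `F`, as `F` has a linear section over
its range. Hence the entropy equals `rank F * (n - rank G)`, where `n` is the number of columns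
of `E`. -/

/-- The probability mass function of the uniform distribution on `Ω`. It is an `abbrev` so that
it unifies with the constant function written out in `stmt0`. -/
noncomputable abbrev uniformMass (Ω : Type*) [Fintype Ω] : Ω → ℝ :=
  fun _ => 1 / Fintype.card Ω

section Entropy

variable {Ω α : Type*} [Fintype Ω] [DecidableEq α]

lemma sum_uniformMass [Nonempty Ω] : ∑ ω, uniformMass Ω ω = 1 := by
  simp

lemma pr_eq_zero_of_notMem_range (p : Ω → ℝ) {X : Ω → α} {x : α} (hx : x ∉ Set.range X) :
    pr p X x = 0 :=
  sum_eq_zero fun ω _ => if_neg fun h => hx ⟨ω, h⟩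

lemma sum_pr [Fintype α] (p : Ω → ℝ) (X : Ω → α) : ∑ x, pr p X x = ∑ ω, p ω := by
  unfold pr
  rw [sum_comm]
  simp

lemma pr_uniformMass (X : Ω → α) (x : α) :
    pr (uniformMass Ω) X x = #{ω | X ω = x} / Fintype.card Ω := by
  simp [pr, ← sum_filter, div_eq_mul_inv]

lemma Hq_eq_logb_card_range [Fintype α] (q : ℕ) {p : Ω → ℝ} {X : Ω → α} (hp : ∑ ω, p ω = 1)
    (hX : ∀ ω ω', pr p X (X ω) = pr p X (X ω')) :
    Hq q p X = Real.logb q (Nat.card (Set.range X)) := by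
  obtain ⟨ω₀, -, -⟩ := exists_ne_zero_of_sum_ne_zero (hp.trans_ne one_ne_zero)
  set t := pr p X (X ω₀)
  have pr_eq (x : α) : pr p X x = if x ∈ Set.range X then t else 0 := by
    split_ifs with hx
    · obtain ⟨ω, rfl⟩ := hx
      exact hX ω ω₀
    · exact pr_eq_zero_of_notMem_range p hx
  have sum_one : ∑ x, pr p X x = 1 := (sum_pr p X).trans hp
  have card_mul : (Nat.card (Set.range X) : ℝ) * t = 1 := by
    rw [← sum_one, sum_congr rfl fun x _ => pr_eq x, ← sum_filter, sum_const, nsmul_eq_mul,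
      Nat.card_eq_fintype_card, Fintype.card_subtype]
  have term_eq (x : α) : pr p X x * Real.logb q (pr p X x) = pr p X x * Real.logb q t := by
    rw [pr_eq]
    split_ifs <;> simp
  calc Hq q p X = -∑ x, pr p X x * Real.logb q t := by simp only [Hq, term_eq]
    _ = -Real.logb q t := by rw [← sum_mul, sum_one, one_mul]
    _ = Real.logb q (Nat.card (Set.range X)) := by
      rw [eq_inv_of_mul_eq_one_left card_mul, Real.logb_inv]

lemma Hq_addMonoidHom {A B : Type*} [AddGroup A] [Fintype A] [AddMonoid B] [Fintype B]
    [DecidableEq B] (q : ℕ) (f : A →+ B) :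
    Hq q (uniformMass A) f = Real.logb q (Nat.card (Set.range f)) :=
  Hq_eq_logb_card_range q sum_uniformMass fun a a' => by
    rw [pr_uniformMass, pr_uniformMass,
      AddMonoidHom.card_fiber_eq_of_mem_range f (Set.mem_range_self a) (Set.mem_range_self a')]

end Entropy

section LinearEntropy

open Module

variable {K V W W' : Type*} [Field K] [AddCommGroup V] [Module K V]
  [AddCommGroup W] [Module K W] [AddCommGroup W'] [Module K W']

lemma finrank_range_prod [FiniteDimensional K V] (f : V →ₗ[K] W) (g : V →ₗ[K] W') :
    finrank K (f.prod g).range = finrank K (g.ker.map f) + finrank K g.range := by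
  have ker_eq : finrank K (f.domRestrict g.ker).ker = finrank K (f.prod g).ker := by
    rw [← Submodule.finrank_map_subtype_eq, LinearMap.ker_domRestrict,
      Submodule.map_comap_subtype, LinearMap.ker_prod, inf_comm]
  have nullity_restrict := (f.domRestrict g.ker).finrank_range_add_finrank_ker
  rw [LinearMap.range_domRestrict, ker_eq] at nullity_restrict
  have nullity_prod := (f.prod g).finrank_range_add_finrank_ker
  have nullity_g := g.finrank_range_add_finrank_ker
  omega

variable [Fintype K] [Fintype V] [Fintype W] [DecidableEq W] [Fintype W'] [DecidableEq W']

lemma Hq_linearMap (f : V →ₗ[K] W) :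
    Hq (Fintype.card K) (uniformMass V) f = finrank K f.range := by
  have card_range : Nat.card (Set.range f) = Fintype.card K ^ finrank K f.range := by
    rw [← Nat.card_eq_fintype_card, ← natCard_eq_pow_finrank]
    rfl
  have one_lt_card : (1 : ℝ) < Fintype.card K := mod_cast Fintype.one_lt_card
  calc Hq (Fintype.card K) (uniformMass V) f
      = Real.logb (Fintype.card K) (Nat.card (Set.range f)) :=
        Hq_addMonoidHom _ f.toAddMonoidHom
    _ = finrank K f.range := by
        rw [card_range, Nat.cast_pow, Real.logb_pow, Real.logb_self_eq_one one_lt_card, mul_one]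

lemma condHq_linearMap (f : V →ₗ[K] W) (g : V →ₗ[K] W') :
    condHq (Fintype.card K) (uniformMass V) f g = finrank K (g.ker.map f) := by
  have joint : Hq (Fintype.card K) (uniformMass V) (fun v => (f v, g v)) =
      finrank K (f.prod g).range := Hq_linearMap (f.prod g)
  rw [condHq, joint, Hq_linearMap g, finrank_range_prod, Nat.cast_add, add_sub_cancel_right]

end LinearEntropy

section LinearMapRank

open Module

variable {K : Type*} [Field K] {U U' V V' : Type*} [AddCommGroup U] [Module K U]
  [AddCommGroup U'] [Module K U'] [AddCommGroup V] [Module K V] [AddCommGroup V'] [Module K V']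

lemma map_compRight_ker_lcomp (f : V →ₗ[K] V') (g : U' →ₗ[K] U) :
    (g.lcomp K V).ker.map (f.compRight K) =
      (f.range.subtype.compRight K ∘ₗ g.range.mkQ.lcomp K f.range).range := by
  ext h
  constructor
  · rintro ⟨e, he, rfl⟩
    have range_le : g.range ≤ (f.rangeRestrict ∘ₗ e).ker := by
      rintro _ ⟨u, rfl⟩
      have heu : e (g u) = 0 := LinearMap.congr_fun he u
      simp [heu]
    exact ⟨g.range.liftQ (f.rangeRestrict ∘ₗ e) range_le, rfl⟩
  · rintro ⟨k, rfl⟩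
    obtain ⟨σ, hσ⟩ := f.rangeRestrict.exists_rightInverse_of_surjective f.range_rangeRestrict
    refine ⟨σ ∘ₗ k ∘ₗ g.range.mkQ, ?_, ?_⟩
    · ext u
      have mk_eq_zero : g.range.mkQ (g u) = 0 :=
        (Submodule.Quotient.mk_eq_zero _).2 (g.mem_range_self u)
      simp only [LinearMap.lcomp_apply, LinearMap.comp_apply, mk_eq_zero, map_zero,
        LinearMap.zero_apply]
    · ext u
      exact congrArg Subtype.val (LinearMap.congr_fun hσ (k (g.range.mkQ u)))

lemma finrank_map_compRight_ker_lcomp (f : V →ₗ[K] V') (g : U' →ₗ[K] U)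
    [FiniteDimensional K (U ⧸ g.range)] :
    finrank K ((g.lcomp K V).ker.map (f.compRight K)) =
      finrank K (U ⧸ g.range) * finrank K f.range := by
  have injective :
      Function.Injective (f.range.subtype.compRight K ∘ₗ g.range.mkQ.lcomp K f.range) := by
    intro k k' h
    ext u
    exact LinearMap.congr_fun h u
  rw [map_compRight_ker_lcomp, LinearMap.finrank_range_of_inj injective, finrank_linearMap]

end LinearMapRank

section MatrixRank

open Module

variable {K : Type*} [Field K] {l m n o : Type*} [Fintype m] [Fintype n] [Fintype o]

lemma finrank_map_mulLeft_ker_mulRight (F : Matrix l m K) (G : Matrix n o K) :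
    finrank K ((mulRightLinearMap m K G).ker.map (mulLeftLinearMap n K F)) =
      F.rank * (Fintype.card n - G.rank) := by
  classical
  let toLinE : Matrix m n K ≃ₗ[K] (n → K) →ₗ[K] m → K := Matrix.toLin'
  let toLinFE : Matrix l n K ≃ₗ[K] (n → K) →ₗ[K] l → K := Matrix.toLin'
  have map_ker : (mulRightLinearMap m K G).ker.map toLinE.toLinearMap =
      (G.mulVecLin.lcomp K (m → K)).ker := by
    ext e
    obtain ⟨E, rfl⟩ := toLinE.surjective e
    have lcomp_eq : G.mulVecLin.lcomp K (m → K) (toLinE E) = Matrix.toLin' (E * G) :=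
      (Matrix.toLin'_mul E G).symm
    rw [Submodule.mem_map_equiv, toLinE.symm_apply_apply, LinearMap.mem_ker, LinearMap.mem_ker,
      lcomp_eq, LinearEquiv.map_eq_zero_iff, mulRightLinearMap_apply]
  have toLin_comp : toLinFE.toLinearMap ∘ₗ mulLeftLinearMap n K F =
      F.mulVecLin.compRight K ∘ₗ toLinE.toLinearMap :=
    LinearMap.ext fun E => Matrix.toLin'_mul F E
  rw [← toLinFE.finrank_map_eq, ← Submodule.map_comp, toLin_comp, Submodule.map_comp, map_ker,
    finrank_map_compRight_ker_lcomp, Submodule.finrank_quotient, finrank_fintype_fun_eq_card,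
    mul_comm, Matrix.rank, Matrix.rank]

theorem stmt0_general [Fintype K] [DecidableEq K] [Fintype l] [DecidableEq l] [DecidableEq m]
    [DecidableEq n] [DecidableEq o] (F : Matrix l m K) (G : Matrix n o K) :
    condHq (Fintype.card K) (uniformMass (Matrix m n K)) (fun E => F * E) (fun E => E * G) =
      F.rank * ((Fintype.card n : ℝ) - G.rank) := by
  rw [← Nat.cast_sub G.rank_le_card_height, ← Nat.cast_mul, ← finrank_map_mulLeft_ker_mulRight]
  exact condHq_linearMap (mulLeftLinearMap n K F) (mulRightLinearMap m K G)

end MatrixRank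

/-- If `E` is a uniformly random `s × s` matrix over the finite field with `q`
elements, `F` is a fixed full-rank `c × s` matrix and `G` is a fixed full-rank
`s × d` matrix, then `H_q(FE | EG) ≥ cs - cd`. -/
theorem stmt0 (c d s q : ℕ) (hc : 0 < c) (hd : 0 < d) (hs : 0 < s)
    (hcs : c ≤ s) (hds : d ≤ s)
    (K : Type) [Field K] [Fintype K] [DecidableEq K] (hq : Fintype.card K = q)
    (F : Matrix (Fin c) (Fin s) K) (G : Matrix (Fin s) (Fin d) K)
    (hF : F.rank = c) (hG : G.rank = d) :
    (c : ℝ) * s - (c : ℝ) * d ≤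
      condHq q
        (fun _ : Matrix (Fin s) (Fin s) K =>
          (1 : ℝ) / Fintype.card (Matrix (Fin s) (Fin s) K))
        (fun E => F * E) (fun E => E * G) := by
  subst hq
  rw [stmt0_general F G, hF, hG, Fintype.card_fin, mul_sub]
end

section
/- Let c, d, s be positive integers with c ≤ s and d ≤ s, and let q be a prime power. Let F be a full-rank c×s matrix over F_q and G a full-rank d×s matrix over F_q. Let 𝓕 = I_{s×s} ⊗ F (a cs × s² matrix, the Kronecker product of the s×s identity matrix with F) and 𝓖 = G ⊗ I_{s×s} (a ds × s² matrix). Let 𝓗 be the (c+d)s × s² matrix obtained by vertically stacking 𝓕 on top of 𝓖. Then rank(𝓗) ≥ (c+d)s − cd. -/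
open Matrix Kronecker

/-! The row space of `I ⊗ F` is `W ⊗ P` and that of `G ⊗ I` is `Q ⊗ V`, where `P ⊆ V = Kⁿ` and
`Q ⊆ W = Kʳ` are the row spaces of `F` and `G`. The row space of the stacked matrix is their
sum, which is the kernel of the surjection `W ⊗ V → (W ⧸ Q) ⊗ (V ⧸ P)`, so rank–nullity gives
its dimension `dim W * dim V - (dim W - dim Q) * (dim V - dim P)` exactly. -/

section LinearMap

open Module

variable {K V V' W W' : Type*} [Field K] [AddCommGroup V] [Module K V] [AddCommGroup V']
  [Module K V'] [AddCommGroup W] [Module K W] [AddCommGroup W'] [Module K W']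

theorem finrank_range_lTensor_sup_range_rTensor_add_finrank_quotient_mul [FiniteDimensional K V]
    [FiniteDimensional K W] (f : V' →ₗ[K] V) (g : W' →ₗ[K] W) :
    finrank K ↥((f.lTensor W).range ⊔ (g.rTensor V).range) +
        finrank K (W ⧸ g.range) * finrank K (V ⧸ f.range) =
      finrank K W * finrank K V := by
  let π := TensorProduct.map g.range.mkQ f.range.mkQ
  have ker_π : π.ker = (f.lTensor W).range ⊔ (g.rTensor V).range :=
    TensorProduct.map_ker g.exact_map_mkQ_range g.range.mkQ_surjective
      f.exact_map_mkQ_range f.range.mkQ_surjective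
  have range_π : π.range = ⊤ := LinearMap.range_eq_top.mpr <|
    TensorProduct.map_surjective g.range.mkQ_surjective f.range.mkQ_surjective
  have rank_nullity := π.finrank_range_add_finrank_ker
  rwa [range_π, finrank_top, ker_π, finrank_tensorProduct, finrank_tensorProduct,
    add_comm] at rank_nullity

theorem finrank_range_lTensor_sup_range_rTensor_add_finrank_range_mul [FiniteDimensional K V]
    [FiniteDimensional K W] (f : V' →ₗ[K] V) (g : W' →ₗ[K] W) :
    finrank K ↥((f.lTensor W).range ⊔ (g.rTensor V).range) +
        finrank K f.range * finrank K g.range =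
      finrank K W * finrank K f.range + finrank K g.range * finrank K V := by
  have hsup := finrank_range_lTensor_sup_range_rTensor_add_finrank_quotient_mul f g
  rw [← f.range.finrank_quotient_add_finrank, ← g.range.finrank_quotient_add_finrank] at hsup ⊢
  linarith

end LinearMap

section Matrix

open Module

theorem toLin_fromCols {R M₁ M₂ N m n₁ n₂ : Type*} [CommSemiring R] [AddCommMonoid M₁]
    [Module R M₁] [AddCommMonoid M₂] [Module R M₂] [AddCommMonoid N] [Module R N]
    [Finite m] [Fintype n₁] [Fintype n₂] [DecidableEq n₁] [DecidableEq n₂]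
    (b₁ : Basis n₁ R M₁) (b₂ : Basis n₂ R M₂) (b : Basis m R N)
    (A : Matrix m n₁ R) (B : Matrix m n₂ R) :
    toLin (b₁.prod b₂) b (fromCols A B) = (toLin b₁ b A).coprod (toLin b₂ b B) := by
  cases nonempty_fintype m
  refine (b₁.prod b₂).ext ?_
  rintro (j | j) <;> rw [toLin_self] <;> simp [toLin_self]

variable {K m n p r : Type*} [Field K] [Fintype n] [Fintype r] [DecidableEq n] [DecidableEq r]

theorem rank_fromCols_kronecker_add_rank_mul_rank [Fintype m] [Fintype p]
    (A : Matrix n m K) (B : Matrix r p K) :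
    (fromCols ((1 : Matrix r r K) ⊗ₖ A) (B ⊗ₖ (1 : Matrix n n K))).rank + A.rank * B.rank =
      Fintype.card r * A.rank + B.rank * Fintype.card n := by
  classical
  let bm := Pi.basisFun K m
  let bn := Pi.basisFun K n
  let bp := Pi.basisFun K p
  let br := Pi.basisFun K r
  have range_toLin : (toLin ((br.tensorProduct bm).prod (bp.tensorProduct bn))
      (br.tensorProduct bn) (fromCols (1 ⊗ₖ A) (B ⊗ₖ 1))).range =
        ((toLin bm bn A).lTensor (r → K)).range ⊔ ((toLin bp br B).rTensor (n → K)).range := by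
    rw [toLin_fromCols, LinearMap.range_coprod, toLin_kronecker, toLin_kronecker, toLin_one,
      toLin_one, LinearMap.lTensor_def, LinearMap.rTensor_def]
  rw [rank_eq_finrank_range_toLin _ (br.tensorProduct bn)
      ((br.tensorProduct bm).prod (bp.tensorProduct bn)), range_toLin,
    rank_eq_finrank_range_toLin A bn bm, rank_eq_finrank_range_toLin B br bp,
    finrank_range_lTensor_sup_range_rTensor_add_finrank_range_mul, finrank_fintype_fun_eq_card,
    finrank_fintype_fun_eq_card]

theorem stmt2_general [Finite m] [Finite p] (F : Matrix m n K) (G : Matrix p r K) :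
    (fromRows ((1 : Matrix r r K) ⊗ₖ F) (G ⊗ₖ (1 : Matrix n n K))).rank + F.rank * G.rank =
      Fintype.card r * F.rank + G.rank * Fintype.card n := by
  cases nonempty_fintype m
  cases nonempty_fintype p
  rw [← rank_transpose, transpose_fromRows, ← kroneckerMap_transpose, ← kroneckerMap_transpose,
    transpose_one, transpose_one, ← rank_transpose F, ← rank_transpose G]
  exact rank_fromCols_kronecker_add_rank_mul_rank Fᵀ Gᵀ

end Matrix

/-- Let `F` be a full-rank `c × s` matrix and `G` a full-rank `d × s` matrix over a
finite field with `q` elements (`c, d ≤ s`). Let `𝓕 = I_{s×s} ⊗ F` and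
`𝓖 = G ⊗ I_{s×s}` and let `𝓗` be the vertical stacking of `𝓕` on top of `𝓖`.
Then `rank 𝓗 ≥ (c+d)s − cd`. -/
theorem stmt2 (c d s q : ℕ) (hc : 0 < c) (hd : 0 < d) (hs : 0 < s)
    (hcs : c ≤ s) (hds : d ≤ s)
    (K : Type) [Field K] [Fintype K] [DecidableEq K] (hq : Fintype.card K = q)
    (F : Matrix (Fin c) (Fin s) K) (G : Matrix (Fin d) (Fin s) K)
    (hF : F.rank = c) (hG : G.rank = d) :
    (c + d) * s - c * d ≤
      (Matrix.fromRows ((1 : Matrix (Fin s) (Fin s) K) ⊗ₖ F)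
        (G ⊗ₖ (1 : Matrix (Fin s) (Fin s) K))).rank := by
  have h := stmt2_general F G
  grind [Fintype.card_fin]
end

section
/- Let s, m, c be positive integers with m + c ≤ s, and let q be a prime power. Let B be a random matrix distributed uniformly over the s×s matrices with entries in F_q. Let X and Y be fixed m×s matrices over F_q and Λ and Θ be fixed c×s matrices over F_q such that the (c+m)×s matrix obtained by vertically stacking Λ on top of Y has rank c+m, and the (c+m)×s matrix obtained by vertically stacking Θ on top of X has rank c+m. Then the conditional Shannon entropy in base q satisfies H_q(B·Xᵀ, Λ·B | Y·B, B·Θᵀ) ≥ ms + cs − (m+c)². -/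
open Finset Matrix

/-!
The entropy, in base `#K`, of a `K`-linear function of a uniform vector is the dimension of the
space minus the dimension of the kernel. Hence `H(f(B) | g(B)) = dim ker g - dim (ker f ⊓ ker g)`,
and only the spaces `{B | A * B = 0 ∧ B * Cᵀ = 0}` have to be measured. Such a `B` amounts to a
linear map from the cokernel of `Cᵀ` to the kernel of `A`, so for `B` of size `n × p` that space
has dimension `(n - rank A) * (p - rank C)`. This evaluates the conditional entropy exactly, and
the bound follows from `rank Y ≤ m` and `rank Θ ≤ c`.
-/

section Entropy

variable {Ω α : Type*} [Fintype Ω] [DecidableEq α]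

theorem Hq_eq_neg_sum_mul_logb_pr [Fintype α] (q : ℕ) (p : Ω → ℝ) (X : Ω → α) :
    Hq q p X = -∑ ω, p ω * Real.logb q (pr p X (X ω)) := by
  have expand (x : α) : pr p X x * Real.logb q (pr p X x) =
      ∑ ω, if X ω = x then p ω * Real.logb q (pr p X (X ω)) else 0 := by
    rw [pr, Finset.sum_mul]
    refine Finset.sum_congr rfl fun ω _ => ?_
    split_ifs with h
    · rw [h, pr]
    · exact zero_mul _
  simp_rw [Hq, expand]
  rw [Finset.sum_comm]
  simp only [Finset.sum_ite_eq, Finset.mem_univ, if_true]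

theorem pr_uniform (X : Ω → α) (x : α) :
    pr (fun _ : Ω => (1 : ℝ) / Fintype.card Ω) X x =
      (#{ω | X ω = x} : ℝ) / Fintype.card Ω := by
  rw [pr, ← Finset.sum_filter, Finset.sum_const, nsmul_eq_mul, mul_one_div]

theorem Hq_uniform_of_card_fiber_eq [Nonempty Ω] [Fintype α] (q : ℕ) (X : Ω → α) (k : ℕ)
    (hX : ∀ ω, #{ω' | X ω' = X ω} = k) :
    Hq q (fun _ : Ω => (1 : ℝ) / Fintype.card Ω) X =
      -Real.logb q ((k : ℝ) / Fintype.card Ω) := by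
  simp only [Hq_eq_neg_sum_mul_logb_pr, pr_uniform, hX, Finset.sum_const, Finset.card_univ,
    nsmul_eq_mul]
  field_simp

end Entropy

section LinearEntropy

open Module

variable {K V W W' : Type*} [Field K] [Fintype K] [AddCommGroup V] [Module K V] [Fintype V]
  [AddCommGroup W] [Module K W] [DecidableEq W]
  [AddCommGroup W'] [Module K W'] [DecidableEq W']

theorem card_fiber_linearMap (L : V →ₗ[K] W) (v : V) :
    #{u | L u = L v} = Fintype.card K ^ finrank K (LinearMap.ker L) := by
  have fiber_eq : #{u | L u = L v} = #{u | L u = 0} :=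
    AddMonoidHom.card_fiber_eq_of_mem_range L ⟨v, rfl⟩ ⟨0, map_zero L⟩
  rw [fiber_eq, ← Fintype.card_subtype, ← Nat.card_eq_fintype_card, ← Nat.card_eq_fintype_card]
  exact Module.natCard_eq_pow_finrank (K := K) (V := LinearMap.ker L)

variable [Fintype W] [Fintype W']

theorem Hq_uniform_linearMap (L : V →ₗ[K] W) :
    Hq (Fintype.card K) (fun _ : V => (1 : ℝ) / Fintype.card V) L =
      (finrank K V : ℝ) - finrank K (LinearMap.ker L) := by
  have one_lt_card : (1 : ℝ) < Fintype.card K := mod_cast Fintype.one_lt_card (α := K)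
  have card_ne_zero : (Fintype.card K : ℝ) ≠ 0 := by positivity
  rw [Hq_uniform_of_card_fiber_eq _ _ _ (card_fiber_linearMap L),
    Module.card_eq_pow_finrank (K := K) (V := V)]
  push_cast
  rw [Real.logb_div (pow_ne_zero _ card_ne_zero) (pow_ne_zero _ card_ne_zero), Real.logb_pow,
    Real.logb_pow, Real.logb_self_eq_one one_lt_card]
  ring

theorem condHq_uniform_linearMap (L : V →ₗ[K] W) (L' : V →ₗ[K] W') :
    condHq (Fintype.card K) (fun _ : V => (1 : ℝ) / Fintype.card V) L L' =
      (finrank K (LinearMap.ker L') : ℝ) -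
        finrank K (LinearMap.ker L ⊓ LinearMap.ker L' : Submodule K V) := by
  have joint := Hq_uniform_linearMap (L.prod L')
  rw [LinearMap.ker_prod] at joint
  change Hq _ _ (L.prod L') - Hq _ _ L' = _
  rw [joint, Hq_uniform_linearMap]
  ring

end LinearEntropy

section QuotientToSubmodule

variable {R M N : Type*} [CommRing R] [AddCommGroup M] [Module R M] [AddCommGroup N] [Module R N]

/-- The inclusion of `Hom(N ⧸ Q, P)` into `Hom(N, M)`, for submodules `P` of `M` and `Q` of `N`. It
serves to compute the dimension of the space of maps with range in `P` that vanish on `Q`. -/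
def homOfQuotientToSubmodule (Q : Submodule R N) (P : Submodule R M) :
    ((N ⧸ Q) →ₗ[R] P) →ₗ[R] (N →ₗ[R] M) :=
  LinearMap.lcomp R M Q.mkQ ∘ₗ LinearMap.compRight R P.subtype

theorem homOfQuotientToSubmodule_injective (Q : Submodule R N) (P : Submodule R M) :
    Function.Injective (homOfQuotientToSubmodule Q P) := fun _ _ h =>
  (LinearMap.cancel_left P.injective_subtype).1 ((LinearMap.cancel_right Q.mkQ_surjective).1 h)

theorem mem_range_homOfQuotientToSubmodule {Q : Submodule R N} {P : Submodule R M} {g : N →ₗ[R] M} :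
    g ∈ LinearMap.range (homOfQuotientToSubmodule Q P) ↔
      LinearMap.range g ≤ P ∧ Q ≤ LinearMap.ker g := by
  constructor
  · rintro ⟨f, rfl⟩
    refine ⟨?_, fun x hx => ?_⟩
    · rintro _ ⟨x, rfl⟩
      exact (f (Q.mkQ x)).2
    · simp [homOfQuotientToSubmodule, (Submodule.Quotient.mk_eq_zero Q).2 hx]
  · rintro ⟨range_le, le_ker⟩
    have mem_P (x : N) : g x ∈ P := range_le ⟨x, rfl⟩
    refine ⟨Q.liftQ (g.codRestrict P mem_P) (by rwa [LinearMap.ker_codRestrict]), ?_⟩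
    ext x
    rfl

end QuotientToSubmodule

section TwoSidedAnnihilator

open Module

variable {K n p ι ι₁ ι₂ κ κ₁ κ₂ : Type*} [Field K] [Fintype n] [Fintype p]

/-- The space of matrices `B` with `A * B = 0` and `B * Cᵀ = 0`, which describes the uncertainty
about a matrix `B` that remains once `A * B` and `B * Cᵀ` are known. -/
def twoSidedAnnihilator (A : Matrix ι n K) (C : Matrix κ p K) : Submodule K (Matrix n p K) :=
  LinearMap.ker (mulLeftLinearMap p K A) ⊓ LinearMap.ker (mulRightLinearMap n K Cᵀ)

theorem mem_twoSidedAnnihilator {A : Matrix ι n K} {C : Matrix κ p K} {B : Matrix n p K} :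
    B ∈ twoSidedAnnihilator A C ↔ A * B = 0 ∧ B * Cᵀ = 0 :=
  Iff.rfl

theorem twoSidedAnnihilator_fromRows (A₁ : Matrix ι₁ n K) (A₂ : Matrix ι₂ n K)
    (C₁ : Matrix κ₁ p K) (C₂ : Matrix κ₂ p K) :
    twoSidedAnnihilator (fromRows A₁ A₂) (fromRows C₂ C₁) =
      twoSidedAnnihilator A₁ C₁ ⊓ twoSidedAnnihilator A₂ C₂ := by
  ext B
  simp only [mem_twoSidedAnnihilator, Submodule.mem_inf, transpose_fromRows, mul_fromCols,
    fromRows_mul, ← fromRows_zero, ← fromCols_zero, fromRows_ext_iff, fromCols_ext_iff]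
  tauto

theorem finrank_ker_mulVecLin (A : Matrix ι n K) :
    (finrank K (LinearMap.ker A.mulVecLin) : ℝ) = Fintype.card n - A.rank := by
  have rank_nullity := LinearMap.finrank_range_add_finrank_ker A.mulVecLin
  rw [Module.finrank_fintype_fun_eq_card] at rank_nullity
  rw [← rank_nullity, Nat.cast_add, Matrix.rank, add_sub_cancel_left]

theorem finrank_quotient_range_mulVecLin_transpose [Fintype κ] (C : Matrix κ p K) :
    (finrank K ((p → K) ⧸ LinearMap.range Cᵀ.mulVecLin) : ℝ) = Fintype.card p - C.rank := by
  have finrank_add := Submodule.finrank_quotient_add_finrank (LinearMap.range Cᵀ.mulVecLin)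
  rw [Module.finrank_fintype_fun_eq_card, ← Matrix.rank, rank_transpose] at finrank_add
  rw [← finrank_add, Nat.cast_add, add_sub_cancel_right]

theorem map_toLin'_twoSidedAnnihilator [DecidableEq p] [Fintype κ]
    (A : Matrix ι n K) (C : Matrix κ p K) :
    (twoSidedAnnihilator A C).map (toLin' : Matrix n p K ≃ₗ[K] _).toLinearMap =
      LinearMap.range
        (homOfQuotientToSubmodule (LinearMap.range Cᵀ.mulVecLin) (LinearMap.ker A.mulVecLin)) := by
  classical
  ext g
  obtain ⟨B, rfl⟩ := (toLin' : Matrix n p K ≃ₗ[K] _).surjective g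
  rw [mem_range_homOfQuotientToSubmodule, LinearMap.range_le_ker_iff, LinearMap.range_le_ker_iff,
    Submodule.mem_map_equiv, LinearEquiv.symm_apply_apply, mem_twoSidedAnnihilator]
  simp only [← toLin'_apply', ← toLin'_mul, LinearEquiv.map_eq_zero_iff]

theorem finrank_twoSidedAnnihilator [Finite κ] (A : Matrix ι n K) (C : Matrix κ p K) :
    (finrank K (twoSidedAnnihilator A C) : ℝ) =
      ((Fintype.card n : ℝ) - A.rank) * ((Fintype.card p : ℝ) - C.rank) := by
  classical
  have := Fintype.ofFinite κ
  rw [← LinearEquiv.finrank_map_eq toLin', map_toLin'_twoSidedAnnihilator,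
    LinearMap.finrank_range_of_inj (homOfQuotientToSubmodule_injective _ _), finrank_linearMap,
    Nat.cast_mul, finrank_ker_mulVecLin, finrank_quotient_range_mulVecLin_transpose, mul_comm]

end TwoSidedAnnihilator

theorem le_sub_mul_sub_sub_sq {a b m c s : ℝ} (ha : a ≤ m) (hb : b ≤ c) (hm : 0 ≤ m) (hc : 0 ≤ c)
    (hmc : m + c ≤ s) :
    m * s + c * s - (m + c) ^ 2 ≤ (s - a) * (s - b) - (s - (m + c)) ^ 2 := by
  have mul_mono : (s - m) * (s - c) ≤ (s - a) * (s - b) :=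
    mul_le_mul (by linarith) (by linarith) (by linarith) (by linarith)
  have mc_nonneg : 0 ≤ m * c := mul_nonneg hm hc
  linarith

theorem stmt5_general {K n p ι₁ ι₂ κ₁ κ₂ : Type*} [Field K] [Fintype K] [DecidableEq K]
    [Fintype n] [DecidableEq n] [Fintype p] [DecidableEq p]
    [Fintype ι₁] [DecidableEq ι₁] [Fintype ι₂] [DecidableEq ι₂]
    [Fintype κ₁] [DecidableEq κ₁] [Fintype κ₂] [DecidableEq κ₂]
    (X : Matrix κ₁ p K) (Y : Matrix ι₂ n K) (Λ : Matrix ι₁ n K) (Θ : Matrix κ₂ p K) :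
    condHq (Fintype.card K)
        (fun _ : Matrix n p K => (1 : ℝ) / Fintype.card (Matrix n p K))
        (fun B => (B * Xᵀ, Λ * B))
        (fun B => (Y * B, B * Θᵀ)) =
      ((Fintype.card n : ℝ) - Y.rank) * ((Fintype.card p : ℝ) - Θ.rank) -
        ((Fintype.card n : ℝ) - (fromRows Λ Y).rank) *
          ((Fintype.card p : ℝ) - (fromRows Θ X).rank) := by
  let target := (mulRightLinearMap n K Xᵀ).prod (mulLeftLinearMap p K Λ)
  let observed := (mulLeftLinearMap p K Y).prod (mulRightLinearMap n K Θᵀ)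
  have ker_target : LinearMap.ker target = twoSidedAnnihilator Λ X :=
    (LinearMap.ker_prod _ _).trans (inf_comm _ _)
  have ker_observed : LinearMap.ker observed = twoSidedAnnihilator Y Θ := LinearMap.ker_prod _ _
  have entropy := condHq_uniform_linearMap target observed
  rwa [ker_target, ker_observed, ← twoSidedAnnihilator_fromRows, finrank_twoSidedAnnihilator,
    finrank_twoSidedAnnihilator] at entropy

/-- Let `B` be a uniformly random `s × s` matrix over the finite field with `q`
elements.  Let `X, Y` be fixed `m × s` matrices and `Λ, Θ` fixed `c × s` matrices
such that the stackings `Λ ‖ Y` and `Θ ‖ X` both have rank `c + m`.  Then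
`H_q(B·Xᵀ, Λ·B | Y·B, B·Θᵀ) ≥ ms + cs − (m+c)²`. -/
theorem stmt5 (s m c q : ℕ) (hs : 0 < s) (hm : 0 < m) (hc : 0 < c)
    (hmc : m + c ≤ s)
    (K : Type) [Field K] [Fintype K] [DecidableEq K] (hq : Fintype.card K = q)
    (X Y : Matrix (Fin m) (Fin s) K) (Λ Θ : Matrix (Fin c) (Fin s) K)
    (hΛY : (Matrix.fromRows Λ Y).rank = c + m)
    (hΘX : (Matrix.fromRows Θ X).rank = c + m) :
    (m : ℝ) * s + (c : ℝ) * s - ((m : ℝ) + c) ^ 2 ≤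
      condHq q
        (fun _ : Matrix (Fin s) (Fin s) K =>
          (1 : ℝ) / Fintype.card (Matrix (Fin s) (Fin s) K))
        (fun B => (B * Xᵀ, Λ * B))
        (fun B => (Y * B, B * Θᵀ)) := by
  subst hq
  rw [stmt5_general, hΛY, hΘX, Fintype.card_fin, Nat.cast_add, add_comm (c : ℝ), ← sq]
  exact le_sub_mul_sub_sub_sq (mod_cast Y.rank_le_height) (mod_cast Θ.rank_le_height)
    m.cast_nonneg c.cast_nonneg (mod_cast hmc)
end

section
/- Let q be a prime power and s, c, r positive integers with gcd(s, q−1) = 1 and c ≤ s − 1. Let S be a subset of F_q with |S| = r(s−1), and let γ = (γ_0, ..., γ_{s−1}) ∈ F_q^s be a fixed nonzero vector. Let (λ_1, ..., λ_c) be chosen uniformly at random among all c-tuples of pairwise distinct elements of S. Then the probability that Σ_{j=0}^{s−1} γ_j · (λ_i^s)^j = 0 holds simultaneously for all i ∈ {1, ..., c} is at most (1/r)^c. -/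
open Finset

/-!
Since `x ↦ x ^ s` is injective, the elements of `S` whose `s`-th power is a root of
`∑ j, γ j X ^ j` form a set `T` with at most `s - 1` elements. The event is that all `c` draws fall
in `T`. Drawing without replacement, this has probability
`∏ i < c, (#T - i) / (#S - i) ≤ (#T / #S) ^ c`, and `#T / #S ≤ 1 / r`.
-/

section InjTuples

variable {α : Type*} [DecidableEq α]

/-- The `c`-tuples of pairwise distinct elements of `S`, i.e. the sample space of `c` draws from `S`
without replacement. Selecting them from `Fintype.piFinset` allows `α` to be infinite. -/
def injTuples (S : Finset α) (c : ℕ) : Finset (Fin c → α) :=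
  {f ∈ Fintype.piFinset fun _ => S | Function.Injective f}

theorem mem_injTuples {S : Finset α} {c : ℕ} {f : Fin c → α} :
    f ∈ injTuples S c ↔ (∀ i, f i ∈ S) ∧ Function.Injective f := by
  simp [injTuples]

theorem filter_univ_eq_injTuples [Fintype α] (S : Finset α) (c : ℕ) :
    ({f | (∀ i, f i ∈ S) ∧ Function.Injective f} : Finset (Fin c → α)) = injTuples S c := by
  ext f
  simp only [mem_filter, mem_univ, true_and, mem_injTuples]

theorem filter_forall_injTuples (S : Finset α) (c : ℕ) (P : α → Prop) [DecidablePred P] :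
    {f ∈ injTuples S c | ∀ i, P (f i)} = injTuples {x ∈ S | P x} c := by
  ext f
  simp only [mem_filter, mem_injTuples, forall_and]
  tauto

theorem card_injTuples (S : Finset α) (c : ℕ) : #(injTuples S c) = (#S).descFactorial c := by
  have h_embedding : #(univ : Finset (Fin c ↪ S)) = (#S).descFactorial c := by
    rw [card_univ, Fintype.card_embedding_eq, Fintype.card_coe, Fintype.card_fin]
  rw [← h_embedding]
  refine (card_bij (fun e _ i => (e i : α)) ?_ ?_ ?_).symm
  · exact fun e _ => mem_injTuples.2 ⟨fun i => (e i).2, Subtype.val_injective.comp e.injective⟩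
  · exact fun e _ e' _ h => DFunLike.ext _ _ fun i => Subtype.ext (congrFun h i)
  · intro f hf
    obtain ⟨hfS, hf_inj⟩ := mem_injTuples.1 hf
    exact ⟨⟨fun i => ⟨f i, hfS i⟩, fun i j h => hf_inj (congrArg Subtype.val h)⟩, mem_univ _, rfl⟩

end InjTuples

theorem descFactorial_mul_pow_le_descFactorial_mul_pow {d m : ℕ} (hdm : d ≤ m) (c : ℕ) :
    d.descFactorial c * m ^ c ≤ m.descFactorial c * d ^ c := by
  induction c with
  | zero => simp
  | succ c ih =>
    have h_factor : (d - c) * m ≤ (m - c) * d := by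
      rw [Nat.sub_mul, Nat.sub_mul, mul_comm d m]
      exact Nat.sub_le_sub_left (Nat.mul_le_mul_left c hdm) _
    calc d.descFactorial (c + 1) * m ^ (c + 1)
        = ((d - c) * m) * (d.descFactorial c * m ^ c) := by
          rw [Nat.descFactorial_succ]; ring
      _ ≤ ((m - c) * d) * (m.descFactorial c * d ^ c) := Nat.mul_le_mul h_factor ih
      _ = m.descFactorial (c + 1) * d ^ (c + 1) := by
          rw [Nat.descFactorial_succ]; ring

theorem descFactorial_div_descFactorial_le_div_pow {𝕜 : Type*} [Field 𝕜] [LinearOrder 𝕜]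
    [IsStrictOrderedRing 𝕜] {d m c : ℕ} (hdm : d ≤ m) (hcm : c ≤ m) :
    (d.descFactorial c : 𝕜) / m.descFactorial c ≤ ((d : 𝕜) / m) ^ c := by
  have h_desc_pos : 0 < m.descFactorial c := Nat.descFactorial_pos.2 hcm
  have h_pow_pos : 0 < m ^ c := h_desc_pos.trans_le (Nat.descFactorial_le_pow m c)
  rw [div_pow, div_le_div_iff₀ (by exact_mod_cast h_desc_pos) (by exact_mod_cast h_pow_pos),
    mul_comm ((d : 𝕜) ^ c)]
  exact_mod_cast descFactorial_mul_pow_le_descFactorial_mul_pow hdm c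

theorem pow_left_injective_of_coprime_card_sub_one {G₀ : Type*} [GroupWithZero G₀] {n : ℕ}
    (hn : n ≠ 0) (hcop : (Nat.card G₀ - 1).Coprime n) :
    Function.Injective fun x : G₀ => x ^ n := by
  intro x y (hxy : x ^ n = y ^ n)
  have h_zero_iff : x = 0 ↔ y = 0 := by
    rw [← pow_eq_zero_iff hn, hxy, pow_eq_zero_iff hn]
  by_cases hy : y = 0
  · rw [h_zero_iff.2 hy, hy]
  · lift y to G₀ˣ using IsUnit.mk0 y hy
    lift x to G₀ˣ using IsUnit.mk0 x (mt h_zero_iff.1 hy)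
    rw [← Nat.card_units] at hcop
    exact congrArg Units.val ((powCoprime hcop).injective (Units.ext hxy))

theorem card_filter_sum_mul_pow_eq_zero_lt {α R : Type*} [CommRing R] [IsDomain R] [DecidableEq R]
    {n : ℕ} {γ : Fin n → R} (hγ : γ ≠ 0) {φ : α → R} {S : Finset α} (hφ : Set.InjOn φ S) :
    #{x ∈ S | ∑ j, γ j * φ x ^ (j : ℕ) = 0} < n := by
  by_contra! hle
  have h_poly : Polynomial.ofFn n γ = 0 := by
    refine Polynomial.eq_zero_of_degree_lt_of_eval_index_eq_zero _
      (hφ.mono (coe_subset.2 (filter_subset _ S)))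
      ((Polynomial.ofFn_degree_lt γ).trans_le (by exact_mod_cast hle)) fun x hx => ?_
    simpa only [Polynomial.ofFn_eq_sum_monomial, Polynomial.eval_finsetSum,
      Polynomial.eval_monomial] using (mem_filter.1 hx).2
  exact hγ (Polynomial.injective_ofFn n (by rw [h_poly, map_zero]))

theorem stmt12_general {α R : Type*} [DecidableEq α] [CommRing R] [IsDomain R] [DecidableEq R]
    {s c : ℕ} {γ : Fin s → R} (hγ : γ ≠ 0) {φ : α → R} {S : Finset α} (hφ : Set.InjOn φ S)
    (hcS : c ≤ #S) :
    (#{f ∈ injTuples S c | ∀ i, ∑ j, γ j * φ (f i) ^ (j : ℕ) = 0} : ℝ) / #(injTuples S c) ≤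
      (((s - 1 : ℕ) : ℝ) / #S) ^ c := by
  set T : Finset α := {x ∈ S | ∑ j, γ j * φ x ^ (j : ℕ) = 0}
  have hT : #T ≤ s - 1 := Nat.le_sub_one_of_lt (card_filter_sum_mul_pow_eq_zero_lt hγ hφ)
  rw [filter_forall_injTuples S c fun x => ∑ j, γ j * φ x ^ (j : ℕ) = 0, card_injTuples,
    card_injTuples]
  calc ((#T).descFactorial c : ℝ) / (#S).descFactorial c
      ≤ ((#T : ℝ) / #S) ^ c :=
        descFactorial_div_descFactorial_le_div_pow (card_filter_le S _) hcS
    _ ≤ (((s - 1 : ℕ) : ℝ) / #S) ^ c := by gcongr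

/-- Let `F_q` be a finite field with `q` elements, `gcd(s, q−1) = 1`, `c ≤ s−1`,
`S ⊆ F_q` with `|S| = r(s−1)`, and `γ ∈ F_q^s` a fixed nonzero vector.  If
`(λ_1, …, λ_c)` is chosen uniformly at random among all `c`-tuples of pairwise
distinct elements of `S`, then the probability that
`∑_j γ_j (λ_i^s)^j = 0` for all `i` is at most `(1/r)^c`. -/
theorem stmt12 (s c r : ℕ) (hs : 0 < s) (hc : 0 < c) (hr : 0 < r)
    (hcs : c ≤ s - 1)
    (K : Type) [Field K] [Fintype K] [DecidableEq K]
    (q : ℕ) (hq : Fintype.card K = q)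
    (hgcd : Nat.gcd s (q - 1) = 1)
    (S : Finset K) (hS : S.card = r * (s - 1))
    (γ : Fin s → K) (hγ : γ ≠ 0) :
    ((Finset.univ.filter (fun f : Fin c → K =>
        ((∀ i, f i ∈ S) ∧ Function.Injective f) ∧
          ∀ i : Fin c, ∑ j : Fin s, γ j * (f i ^ s) ^ (j : ℕ) = 0)).card : ℝ) /
      ((Finset.univ.filter (fun f : Fin c → K =>
        (∀ i, f i ∈ S) ∧ Function.Injective f)).card : ℝ)
      ≤ (1 / (r : ℝ)) ^ c := by
  have hinj : Function.Injective fun x : K => x ^ s :=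
    pow_left_injective_of_coprime_card_sub_one hs.ne' <| by
      rwa [Nat.card_eq_fintype_card, hq, Nat.coprime_comm]
  have hs_sub : ((s - 1 : ℕ) : ℝ) ≠ 0 := by exact_mod_cast (hc.trans_le hcs).ne'
  have hcS : c ≤ #S := (hcs.trans (Nat.le_mul_of_pos_left _ hr)).trans_eq hS.symm
  rw [← filter_filter, filter_univ_eq_injTuples]
  simpa only [hS, Nat.cast_mul, div_mul_cancel_right₀ hs_sub, one_div] using
    stmt12_general hγ hinj.injOn hcS
end
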